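/- Let K ⊆ ℝ^n be a nonempty closed convex set, let h : ℝ^n → ℝ be lower semicontinuous and (κ,γ)-strongly quasar-convex on K with respect to x̄ ∈ argmin_K h, with κ ∈ (0,1] and γ ≥ 0, and let β > 0. Then the set of fixed points of the proximity operator equals the set of minimizers of h on K: a point x* satisfies x* ∈ Prox_{βh}(K, x*) if and only if x* ∈ argmin_K h. -/

import Mathlib

open Set

/-- `h` is (κ,γ)-strongly quasar-convex on the convex set `K` with respect to `x̄`. -/
def StronglyQuasarConvexOn {n : ℕ} (K : Set (EuclideanSpace ℝ (Fin n)))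
    (h : EuclideanSpace ℝ (Fin n) → ℝ) (κ γ : ℝ)
    (xbar : EuclideanSpace ℝ (Fin n)) : Prop :=
  ∀ x ∈ K, ∀ l ∈ Icc (0:ℝ) 1,
    h (l • xbar + (1 - l) • x) ≤ κ * l * h xbar + (1 - κ * l) * h x
      - l * (1 - l / (2 - κ)) * (κ * γ / 2) * ‖x - xbar‖ ^ 2

/-- The proximity operator `Prox_{βh}(K, z)` of `h` on `K` with parameter `β`. -/
def Prox {n : ℕ} (β : ℝ) (h : EuclideanSpace ℝ (Fin n) → ℝ)
    (K : Set (EuclideanSpace ℝ (Fin n))) (z : EuclideanSpace ℝ (Fin n)) :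
    Set (EuclideanSpace ℝ (Fin n)) :=
  {x ∈ K | ∀ y ∈ K, h x + 1 / (2 * β) * ‖z - x‖ ^ 2 ≤ h y + 1 / (2 * β) * ‖z - y‖ ^ 2}

/-!
A fixed point `x` of the proximity operator minimizes `h + c ‖x - ·‖²` on `K`, where `c = 1 / (2β)`.
Moving from `x` to `l • x̄ + (1 - l) • x` decreases `h` by at least `l κ (h x - h x̄)`, which is of
first order in `l`, while the penalty costs only `l² c ‖x - x̄‖²`. Letting `l → 0` yields
`h x ≤ h x̄`.
-/

/-- `h` is `κ`-quasar-convex on `K` with respect to `xbar`: on each segment from a point of `K` to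
`xbar`, `h` satisfies the convexity inequality with the weight of `xbar` scaled by `κ`. This is
strong quasar-convexity without the quadratic term. -/
def QuasarConvexOn {E : Type*} [AddCommGroup E] [Module ℝ E] (K : Set E) (h : E → ℝ) (κ : ℝ)
    (xbar : E) : Prop :=
  ∀ x ∈ K, ∀ l ∈ Icc (0 : ℝ) 1,
    h (l • xbar + (1 - l) • x) ≤ κ * l * h xbar + (1 - κ * l) * h x

theorem StronglyQuasarConvexOn.quasarConvexOn {n : ℕ} {K : Set (EuclideanSpace ℝ (Fin n))}
    {h : EuclideanSpace ℝ (Fin n) → ℝ} {κ γ : ℝ} {xbar : EuclideanSpace ℝ (Fin n)}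
    (hq : StronglyQuasarConvexOn K h κ γ xbar) (hκ : κ ∈ Icc (0 : ℝ) 1) (hγ : 0 ≤ γ) :
    QuasarConvexOn K h κ xbar := by
  intro x hx l hl
  obtain ⟨hκ₀, hκ₁⟩ := hκ
  have factor_nonneg : 0 ≤ 1 - l / (2 - κ) :=
    sub_nonneg.2 (div_le_one_of_le₀ (by linarith [hl.2]) (by linarith))
  have modulus_nonneg : 0 ≤ l * (1 - l / (2 - κ)) * (κ * γ / 2) * ‖x - xbar‖ ^ 2 := by
    have := hl.1
    positivity
  exact (hq x hx l hl).trans (sub_le_self _ modulus_nonneg)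

open Filter Topology in
theorem nonpos_of_forall_le_mul {a b : ℝ} (hab : ∀ l ∈ Ioc (0 : ℝ) 1, a ≤ l * b) : a ≤ 0 := by
  have tendsto_mul : Tendsto (fun l : ℝ ↦ l * b) (𝓝[>] 0) (𝓝 0) :=
    tendsto_nhdsWithin_of_tendsto_nhds (Continuous.tendsto' (by fun_prop) _ _ (zero_mul b))
  exact ge_of_tendsto tendsto_mul (eventually_of_mem (Ioc_mem_nhdsGT one_pos) hab)

theorem isMinOn_mul_norm_sub_sq {E : Type*} [SeminormedAddCommGroup E] {K : Set E} {c : ℝ}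
    {x : E} (hc : 0 ≤ c) : IsMinOn (fun y ↦ c * ‖x - y‖ ^ 2) K x := by
  refine isMinOn_iff.2 fun y _ ↦ ?_
  simpa using mul_nonneg hc (sq_nonneg ‖x - y‖)

section Proximal

variable {E : Type*} [SeminormedAddCommGroup E] [NormedSpace ℝ E] {K : Set E}
  {h : E → ℝ} {κ c : ℝ} {x xbar : E}

theorem QuasarConvexOn.mul_sub_le_of_isMinOn_add_norm_sq (hq : QuasarConvexOn K h κ xbar)
    (hK : StarConvex ℝ xbar K) (hxK : x ∈ K)
    (hx : IsMinOn (fun y ↦ h y + c * ‖x - y‖ ^ 2) K x) {l : ℝ} (hl : l ∈ Ioc (0 : ℝ) 1) :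
    κ * (h x - h xbar) ≤ l * (c * ‖x - xbar‖ ^ 2) := by
  have hl₀ : 0 ≤ l := hl.1.le
  have segment_mem : l • xbar + (1 - l) • x ∈ K :=
    hK hxK hl₀ (sub_nonneg.2 hl.2) (add_sub_cancel l 1)
  have dist_eq : ‖x - (l • xbar + (1 - l) • x)‖ = l * ‖x - xbar‖ := by
    rw [show x - (l • xbar + (1 - l) • x) = l • (x - xbar) by module, norm_smul,
      Real.norm_of_nonneg hl₀]
  have prox_le : h x ≤ h (l • xbar + (1 - l) • x) + c * (l * ‖x - xbar‖) ^ 2 := by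
    simpa [dist_eq] using isMinOn_iff.1 hx _ segment_mem
  refine le_of_mul_le_mul_left ?_ hl.1
  linear_combination prox_le + hq x hxK l ⟨hl₀, hl.2⟩

theorem QuasarConvexOn.le_of_isMinOn_add_norm_sq (hq : QuasarConvexOn K h κ xbar) (hκ : 0 < κ)
    (hK : StarConvex ℝ xbar K) (hxK : x ∈ K)
    (hx : IsMinOn (fun y ↦ h y + c * ‖x - y‖ ^ 2) K x) : h x ≤ h xbar := by
  have mul_sub_nonpos : κ * (h x - h xbar) ≤ 0 :=
    nonpos_of_forall_le_mul fun _ hl ↦ hq.mul_sub_le_of_isMinOn_add_norm_sq hK hxK hx hl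
  exact sub_nonpos.1 (nonpos_of_mul_nonpos_right mul_sub_nonpos hκ)

theorem stmt_16_general (hK : StarConvex ℝ xbar K) (hκ : 0 < κ) (hxbar : IsMinOn h K xbar)
    (hq : QuasarConvexOn K h κ xbar) (hc : 0 ≤ c) (hxK : x ∈ K) :
    IsMinOn (fun y ↦ h y + c * ‖x - y‖ ^ 2) K x ↔ IsMinOn h K x :=
  ⟨fun hx _ hy ↦ (hq.le_of_isMinOn_add_norm_sq hκ hK hxK hx).trans (hxbar hy),
    fun hx ↦ hx.add (isMinOn_mul_norm_sub_sq hc)⟩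

end Proximal

theorem mem_prox_iff_isMinOn {n : ℕ} {K : Set (EuclideanSpace ℝ (Fin n))}
    {h : EuclideanSpace ℝ (Fin n) → ℝ} {β : ℝ} {z x : EuclideanSpace ℝ (Fin n)} :
    x ∈ Prox β h K z ↔ x ∈ K ∧ IsMinOn (fun y ↦ h y + 1 / (2 * β) * ‖z - y‖ ^ 2) K x :=
  Iff.rfl

theorem stmt_16 {n : ℕ} (K : Set (EuclideanSpace ℝ (Fin n)))
    (hK : K.Nonempty) (hKcl : IsClosed K) (hKcv : Convex ℝ K)
    (h : EuclideanSpace ℝ (Fin n) → ℝ) (hlsc : LowerSemicontinuous h)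
    (κ γ : ℝ) (hκ : κ ∈ Ioc (0:ℝ) 1) (hγ : 0 ≤ γ)
    (xbar : EuclideanSpace ℝ (Fin n)) (hxbarK : xbar ∈ K)
    (hxbar : ∀ x ∈ K, h xbar ≤ h x)
    (hq : StronglyQuasarConvexOn K h κ γ xbar)
    (β : ℝ) (hβ : 0 < β) :
    ∀ xstar : EuclideanSpace ℝ (Fin n),
      xstar ∈ Prox β h K xstar ↔ (xstar ∈ K ∧ ∀ y ∈ K, h xstar ≤ h y) := fun _ ↦
  mem_prox_iff_isMinOn.trans <| and_congr_right <|
    stmt_16_general (hKcv.starConvex hxbarK) hκ.1 hxbar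
      (hq.quasarConvexOn (Ioc_subset_Icc_self hκ) hγ) (by positivity)
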